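/- arXiv:2106.07249 — 2 statements merged into one kernel-verified Lean document; each statement's English description precedes it below -/
import Mathlib

section
/- Let X ⊆ C^ℕ be a transitive subshift over a finite alphabet C with sublinear factor complexity, i.e., the number of length-n words in the language L(X) is O(n). Then the winning shift W(X) ⊆ ℕ^ℕ is countable and has finite coding dimension. -/
open scoped BigOperators

/-- A language is regular if it is accepted by a DFA with finitely many states. -/
def IsRegularLang {α : Type*} (L : Set (List α)) : Prop :=
  ∃ (σ : Type) (_ : Fintype σ) (M : DFA α σ), ∀ w : List α, w ∈ M.accepts ↔ w ∈ L

/-- Pad a word over `A` to length `M` by prepending the padding symbol `none`. -/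
def padOne {A : Type*} (M : ℕ) (w : List A) : List (Option A) :=
  List.replicate (M - w.length) none ++ w.map some

/-- The padded form of a `d`-tuple of words over `A`, as a word over `(A ∪ {#})^d`. -/
def padTuple {A : Type*} {d : ℕ} (ws : Fin d → List A) : List (Fin d → Option A) :=
  List.ofFn fun j : Fin (Finset.univ.sup fun i : Fin d => (ws i).length) =>
    fun i : Fin d =>
      (padOne (Finset.univ.sup fun i : Fin d => (ws i).length) (ws i)).getD j.val none

/-- An abstract numeration system over the alphabet `A`, encoded by the order isomorphism
`rep : ℕ → L ⊆ A*` enumerating its (infinite) language in increasing order. -/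
structure ANS (A : Type*) where
  rep : ℕ → List A
  inj : Function.Injective rep

/-- A set `Y ⊆ ℕ^d` is `S`-recognizable if the padded representations of its members form
a regular language. -/
def ANS.Recognizable {A : Type*} (S : ANS A) {d : ℕ} (Y : Set (Fin d → ℕ)) : Prop :=
  IsRegularLang { w : List (Fin d → Option A) | ∃ t ∈ Y, w = padTuple fun i => S.rep (t i) }

/-- An ANS is addable if the graph of addition is `S`-recognizable. -/
def ANS.Addable {A : Type*} (S : ANS A) : Prop :=
  S.Recognizable { t : Fin 3 → ℕ | t 0 + t 1 = t 2 }

/-- An ANS is comparable if the relation `≤` is `S`-recognizable. -/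
def ANS.Comparable {A : Type*} (S : ANS A) : Prop :=
  S.Recognizable { t : Fin 2 → ℕ | t 0 ≤ t 1 }

/-- An ANS is regular if `ℕ` (i.e. its language) is `S`-recognizable. -/
def ANS.IsRegularANS {A : Type*} (S : ANS A) : Prop :=
  S.Recognizable (Set.univ : Set (Fin 1 → ℕ))

/-- The unary ANS, with language `0*` ordered by length. -/
def unaryANS : ANS Unit where
  rep := fun n => List.replicate n ()
  inj := fun m n h => by simpa using congrArg List.length h

/-- `x` is `S`-automatic: some DFAO outputs `x n` on input `rep_S n`. -/
def SAutomatic {A C : Type*} (S : ANS A) (x : ℕ → C) : Prop :=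
  ∃ (Q : Type) (_ : Fintype Q) (M : DFA A Q) (τ : Q → C),
    ∀ n : ℕ, τ (M.eval (S.rep n)) = x n

/-- The shift map on one-sided infinite words. -/
def shiftMap {C : Type*} (x : ℕ → C) : ℕ → C := fun n => x (n + 1)

/-- The orbit closure of `x` (closure in the product topology over the discrete alphabet):
`y` belongs to it iff every finite prefix of `y` occurs in `x`. -/
def orbitClosure {C : Type*} (x : ℕ → C) : Set (ℕ → C) :=
  { y | ∀ n : ℕ, ∃ m : ℕ, ∀ i < n, y i = x (m + i) }

/-- A subshift: a shift-invariant subset of `C^ℕ` that is closed in the product topology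
over the discrete alphabet (expressed combinatorially). -/
def IsSubshift {C : Type*} (X : Set (ℕ → C)) : Prop :=
  (∀ x ∈ X, shiftMap x ∈ X) ∧
  ∀ y : ℕ → C, (∀ n : ℕ, ∃ x ∈ X, ∀ i < n, y i = x i) → y ∈ X

/-- The language of a set of infinite words: all finite factors of its elements. -/
def LangOf {C : Type*} (X : Set (ℕ → C)) : Set (List C) :=
  { w | ∃ x ∈ X, ∃ p : ℕ, w = List.ofFn fun i : Fin w.length => x (p + i) }

/-- A word is right special in (the language of) `X` if it has two distinct one-letter
extensions in the language of `X`. -/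
def RightSpecial {C : Type*} (X : Set (ℕ → C)) (w : List C) : Prop :=
  ∃ a b : C, a ≠ b ∧ w ++ [a] ∈ LangOf X ∧ w ++ [b] ∈ LangOf X

/-- The factor complexity of `x`: the number of distinct factors of length `n`. -/
noncomputable def factorComplexity {C : Type*} (x : ℕ → C) (n : ℕ) : ℕ :=
  Set.ncard { w : List C | ∃ p : ℕ, w = List.ofFn fun i : Fin n => x (p + i) }

/-- `T` is a strategy tree witnessing `α ∈ W(X)`: a prefix-closed set of finite words
containing the empty word, in which every word of length `i` has exactly `α i + 1`
one-letter extensions, and all whose infinite branches lie in `X`. -/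
def IsStrategyTree {C : Type*} (X : Set (ℕ → C)) (α : ℕ → ℕ) (T : Set (List C)) : Prop :=
  ([] : List C) ∈ T ∧
  (∀ u v : List C, u ++ v ∈ T → u ∈ T) ∧
  (∀ w ∈ T, Set.ncard { c : C | w ++ [c] ∈ T } = α w.length + 1) ∧
  (∀ y : ℕ → C, (∀ n : ℕ, (List.ofFn fun i : Fin n => y i) ∈ T) → y ∈ X)

/-- The winning shift of `X ⊆ C^ℕ`, a subset of `ℕ^ℕ`. -/
def winningShift {C : Type*} (X : Set (ℕ → C)) : Set (ℕ → ℕ) :=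
  { α | ∃ T : Set (List C), IsStrategyTree X α T }

/-- Membership in the winning set of a set `X` of finite words, defined recursively:
`ε ∈ W(X)` iff `ε ∈ X`, and `a :: α ∈ W(X)` iff there is a set of `a + 1` letters `c`
such that `α` is in the winning set of the left quotient of `X` by `c`. -/
def winningSetMem {C : Type*} : List ℕ → Set (List C) → Prop
  | [], X => [] ∈ X
  | a :: α, X => ∃ S : Finset C, S.card = a + 1 ∧ ∀ c ∈ S, winningSetMem α { w | c :: w ∈ X }

/-- `Σ y = m`: the sum of the letters of `y ∈ ℕ^ℕ` is finite and equals `m`. -/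
def sumEq (y : ℕ → ℕ) (m : ℕ) : Prop :=
  (Function.support y).Finite ∧ ∑ᶠ i, y i = m

/-- `Y ⊆ ℕ^ℕ` has finite coding dimension: the sums `Σ y`, `y ∈ Y`, are uniformly bounded. -/
def FiniteCodingDim (Y : Set (ℕ → ℕ)) : Prop :=
  ∃ d : ℕ, ∀ y ∈ Y, ∀ F : Finset ℕ, ∑ i ∈ F, y i ≤ d

/-- The set `{ν(y) : y ∈ Y, Σy = k} ⊆ ℕᵏ`: nondecreasing `k`-tuples `t` such that the word
whose letter at `j` is the number of occurrences of `j` in `t` belongs to `Y`. -/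
def nuSet (Y : Set (ℕ → ℕ)) (k : ℕ) : Set (Fin k → ℕ) :=
  { t | Monotone t ∧ (fun j => Set.ncard { i : Fin k | t i = j }) ∈ Y }

/-- `Y ⊆ ℕ^ℕ` is weakly `S`-codable if `{ν(y) : y ∈ Y, Σy = k}` is `S`-recognizable for
every `k`. -/
def WeaklySCodable {A : Type*} (S : ANS A) (Y : Set (ℕ → ℕ)) : Prop :=
  ∀ k : ℕ, S.Recognizable (nuSet Y k)

/-- `Y ⊆ ℕ^ℕ` is `S`-codable if it is weakly `S`-codable and has finite coding dimension. -/
def SCodable {A : Type*} (S : ANS A) (Y : Set (ℕ → ℕ)) : Prop :=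
  WeaklySCodable S Y ∧ FiniteCodingDim Y

/-- `P_{111}(Y)`: strictly increasing triples `(a, b, c)` such that the word with letter `1`
exactly at positions `a`, `b`, `c` and `0` elsewhere belongs to `Y`. -/
def P111 (Y : Set (ℕ → ℕ)) : Set (Fin 3 → ℕ) :=
  { t | t 0 < t 1 ∧ t 1 < t 2 ∧
        (fun j => if j = t 0 ∨ j = t 1 ∨ j = t 2 then 1 else 0) ∈ Y }

/-- `P_v(Y)` for a finite word `v` over `ℕ`: strictly increasing tuples `n` such that the
word with letter `v i` at position `n i` and `0` elsewhere belongs to `Y`. -/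
def PvSet (v : List ℕ) (Y : Set (ℕ → ℕ)) : Set (Fin v.length → ℕ) :=
  { n | StrictMono n ∧
        (fun j => ∑ i : Fin v.length, if n i = j then v.get i else 0) ∈ Y }

/-- `X` is sofic: the set of label sequences of right-infinite paths in a finite
edge-labeled graph. -/
def IsSofic {C : Type*} (X : Set (ℕ → C)) : Prop :=
  ∃ (V : Type) (_ : Fintype V) (E : Set (V × C × V)),
    X = { x | ∃ p : ℕ → V, ∀ n : ℕ, (p n, x n, p (n + 1)) ∈ E }

/-- The factor `x[a..b-1]` of an infinite word. -/
def segmentOf {C : Type*} (x : ℕ → C) (a b : ℕ) : List C :=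
  List.ofFn fun i : Fin (b - a) => x (a + i)

/-- `U · V^ω`: infinite words that decompose as a word of `U` followed by infinitely many
nonempty words of `V`. -/
def omegaIter {C : Type*} (U V : Set (List C)) : Set (ℕ → C) :=
  { x | ∃ k : ℕ → ℕ, StrictMono k ∧ segmentOf x 0 (k 0) ∈ U ∧
        ∀ i : ℕ, segmentOf x (k i) (k (i + 1)) ∈ V }

/-- `X ⊆ C^ℕ` is ω-regular: a finite union of sets `U · V^ω` with `U`, `V` regular. -/
def IsOmegaRegular {C : Type*} (X : Set (ℕ → C)) : Prop :=
  ∃ (n : ℕ) (U V : Fin n → Set (List C)),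
    (∀ i, IsRegularLang (U i) ∧ IsRegularLang (V i)) ∧
    X = ⋃ i, omegaIter (U i) (V i)

/-- The words `p₁ = a`, `p_{k+1} = p_k bᵏ p_k` (with `a = false`, `b = true`). -/
def pWord : ℕ → List Bool
  | 0 => []
  | 1 => [false]
  | (k + 2) => pWord (k + 1) ++ List.replicate (k + 1) true ++ pWord (k + 1)

/-- Combinatorial continuity of `φ` on `Y` for product topologies over discrete alphabets:
every finite prefix of `φ y` is determined by a finite prefix of `y`. -/
def ContOn {B C : Type*} (φ : (ℕ → B) → (ℕ → C)) (Y : Set (ℕ → B)) : Prop :=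
  ∀ y ∈ Y, ∀ n : ℕ, ∃ m : ℕ, ∀ y' ∈ Y, (∀ i < m, y' i = y i) → ∀ i < n, φ y' i = φ y i

/-!
Every node of a strategy tree lies in the language of `X`, so at a level `n` with `α n ≠ 0` all
nodes are right special. The level has at least `1 + ∑ i < n, α i` nodes, so a uniform bound on the
number of right special words of each length bounds `∑ α`; this yields both conclusions.

That a word `x` of complexity `O(n)` has boundedly many right special factors of each length is a
theorem of Cassaigne, proved here by a direct argument. Choose `N` between `n + 1` and `2 * n + 1`
at which the complexity grows by a bounded amount. The positions at which a factor of length `N`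
occurs in `x` for the first time then form boundedly many runs of consecutive integers, each of
length `O(n)`, and can be covered by boundedly many windows of length `n / 4`. Two positions
`p`, `q` witnessing a right special factor of length `n` can be moved into two of these windows. For
a fixed pair of windows there are at most three right special factors: two witnesses with different
offsets `q - p` force a local period in both windows, and then `(p, q)` is determined, up to moving
along a line of constant offset, by where this period first breaks.
-/

section Counting

variable {α β : Type*}

lemma ncard_setOf_exists_ne_add_two_mul_ncard_image_le {s : Set α} (hs : s.Finite) (f : α → β) :
    {a ∈ s | ∃ b ∈ s, b ≠ a ∧ f b = f a}.ncard + 2 * (f '' s).ncard ≤ 2 * s.ncard := by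
  classical
  lift s to Finset α using hs
  set t : Finset α := {a ∈ s | ∃ b ∈ s, b ≠ a ∧ f b = f a} with ht
  have fiber_le : ∀ y ∈ s.image f,
      ({a ∈ t | f a = y} : Finset α).card + 2 ≤ 2 * ({a ∈ s | f a = y} : Finset α).card := by
    intro y hy
    obtain ⟨a, ha, rfl⟩ := Finset.mem_image.mp hy
    have hle : ({b ∈ t | f b = f a} : Finset α).card ≤ ({b ∈ s | f b = f a} : Finset α).card :=
      Finset.card_le_card (Finset.filter_subset_filter _ (Finset.filter_subset _ s))
    obtain hempty | ⟨b, hb⟩ := ({b ∈ t | f b = f a} : Finset α).eq_empty_or_nonempty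
    · have hpos : 0 < ({b ∈ s | f b = f a} : Finset α).card :=
        Finset.card_pos.mpr ⟨a, by simp [ha]⟩
      rw [hempty, Finset.card_empty]
      omega
    · obtain ⟨⟨hbs, d, hds, hdb, hfd⟩, hfb⟩ : (b ∈ s ∧ ∃ d ∈ s, d ≠ b ∧ f d = f b) ∧ f b = f a := by
        simpa [ht] using hb
      have htwo : 1 < ({b ∈ s | f b = f a} : Finset α).card :=
        Finset.one_lt_card.mpr ⟨b, by simp [hbs, hfb], d, by simp [hds, hfd, hfb], hdb.symm⟩
      omega
  have hmaps : ∀ a ∈ t, f a ∈ s.image f := fun a ha =>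
    Finset.mem_image_of_mem f (Finset.mem_filter.mp ha).1
  have hsum : t.card + 2 * (s.image f).card ≤ 2 * s.card := by
    rw [Finset.card_eq_sum_card_fiberwise hmaps, Finset.card_eq_sum_card_image f s,
      Finset.mul_sum, mul_comm, ← smul_eq_mul, ← Finset.sum_const, ← Finset.sum_add_distrib]
    exact Finset.sum_le_sum fiber_le
  rw [← Finset.coe_image, Set.ncard_coe_finset, Set.ncard_coe_finset]
  convert hsum
  rw [← Set.ncard_coe_finset, ht, Finset.coe_filter]
  rfl

lemma exists_run_start {P : ℕ → Prop} {j : ℕ} (hj : P j) :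
    ∃ r ≤ j, (∀ m ∈ Set.Icc r j, P m) ∧ ∀ i, r = i + 1 → ¬ P i := by
  induction j with
  | zero => exact ⟨0, le_rfl, fun m hm => by rwa [Nat.le_zero.mp hm.2], by simp⟩
  | succ j ih =>
    by_cases hPj : P j
    · obtain ⟨r, hrj, hrun, hstart⟩ := ih hPj
      refine ⟨r, by omega, fun m hm => ?_, hstart⟩
      obtain hmj | rfl := Nat.le_succ_iff.mp hm.2
      · exact hrun m ⟨hm.1, hmj⟩
      · exact hj
    · refine ⟨j + 1, le_rfl, fun m hm => ?_, ?_⟩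
      · rwa [le_antisymm hm.2 hm.1]
      · rintro i hi
        rwa [← Nat.succ_injective hi]

lemma exists_small_increment {f : ℕ → ℕ} {c : ℕ} (hf : ∀ n, f n ≤ c * n + c) (n : ℕ) :
    ∃ N, n + 1 ≤ N ∧ N ≤ 2 * n + 1 ∧ f (N + 1) ≤ f N + 3 * c := by
  by_contra! hlarge
  have hgrowth : ∀ k ≤ n + 1, (3 * c + 1) * k ≤ f (n + 1 + k) := by
    intro k
    induction k with
    | zero => simp
    | succ k ih =>
      intro hk
      have hprev := ih (by omega)
      have hstep := hlarge (n + 1 + k) (by omega) (by omega)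
      rw [← add_assoc]
      linarith
  have hlower := hgrowth (n + 1) le_rfl
  have hupper := hf (n + 1 + (n + 1))
  nlinarith

end Counting

section Factors

variable {C : Type*} {x : ℕ → C} {n p q : ℕ}

/-- The factor of length `n` of the infinite word `x` at position `p`. -/
def factorAt (x : ℕ → C) (n p : ℕ) : List C := List.ofFn fun i : Fin n => x (p + i)

@[simp]
lemma length_factorAt (x : ℕ → C) (n p : ℕ) : (factorAt x n p).length = n := List.length_ofFn

lemma factorAt_eq_iff : factorAt x n p = factorAt x n q ↔ ∀ i < n, x (p + i) = x (q + i) :=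
  List.ofFn_inj.trans (funext_iff.trans Fin.forall_iff)

lemma factorAt_add (x : ℕ → C) (m n p : ℕ) :
    factorAt x (m + n) p = factorAt x m p ++ factorAt x n (p + m) := by
  simp [factorAt, List.ofFn_add, add_assoc]

lemma factorAt_succ (x : ℕ → C) (n p : ℕ) :
    factorAt x (n + 1) p = factorAt x n p ++ [x (p + n)] := by
  simp [factorAt, List.ofFn_succ_last, -List.ofFn_succ]

lemma factorAt_succ' (x : ℕ → C) (n p : ℕ) :
    factorAt x (n + 1) p = x p :: factorAt x n (p + 1) := by
  simp [factorAt, List.ofFn_succ, add_assoc, add_comm 1]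

lemma factorAt_eq_of_le {m : ℕ} (hmn : m ≤ n) (h : factorAt x n p = factorAt x n q) :
    factorAt x m p = factorAt x m q :=
  factorAt_eq_iff.mpr fun i hi => factorAt_eq_iff.mp h i (hi.trans_le hmn)

lemma factorComplexity_eq_ncard_range (x : ℕ → C) (n : ℕ) :
    factorComplexity x n = (Set.range (factorAt x n)).ncard := by
  simp only [factorComplexity, Set.range, factorAt, eq_comm]

lemma finite_range_factorAt [Finite C] (x : ℕ → C) (n : ℕ) : (Set.range (factorAt x n)).Finite :=
  (List.finite_length_eq C n).subset <| by rintro _ ⟨p, rfl⟩; simp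

lemma mem_langOf_iff {X : Set (ℕ → C)} {w : List C} :
    w ∈ LangOf X ↔ ∃ x ∈ X, ∃ p, w = factorAt x w.length p := Iff.rfl

lemma factorAt_mem_langOf {X : Set (ℕ → C)} (hx : x ∈ X) (n p : ℕ) : factorAt x n p ∈ LangOf X :=
  mem_langOf_iff.mpr ⟨x, hx, p, by rw [length_factorAt]⟩

lemma factorComplexity_le_ncard_langOf [Finite C] {X : Set (ℕ → C)} (hx : x ∈ X) (n : ℕ) :
    factorComplexity x n ≤ {w ∈ LangOf X | w.length = n}.ncard := by
  rw [factorComplexity_eq_ncard_range]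
  refine Set.ncard_le_ncard ?_ ((List.finite_length_eq C n).subset fun w hw => hw.2)
  rintro _ ⟨p, rfl⟩
  exact ⟨factorAt_mem_langOf hx n p, length_factorAt x n p⟩

lemma exists_eq_factorAt_of_mem_langOf_orbitClosure {w : List C}
    (hw : w ∈ LangOf (orbitClosure x)) : ∃ p, w = factorAt x w.length p := by
  obtain ⟨y, hy, p, hwy⟩ := mem_langOf_iff.mp hw
  obtain ⟨m, hm⟩ := hy (p + w.length)
  refine ⟨m + p, hwy.trans (List.ofFn_inj.mpr (funext fun i => ?_))⟩
  rw [hm (p + i) (by omega), add_assoc]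

end Factors

section FirstOccurrences

variable {C : Type*} {x : ℕ → C} {n : ℕ}

/-- Position `j` is the first occurrence in `x` of the factor of length `n` found there. -/
def IsFirstOccurrence (x : ℕ → C) (n j : ℕ) : Prop :=
  ∀ i < j, factorAt x n i ≠ factorAt x n j

lemma IsFirstOccurrence.eq {i j : ℕ} (hi : IsFirstOccurrence x n i) (hj : IsFirstOccurrence x n j)
    (hij : factorAt x n i = factorAt x n j) : i = j :=
  le_antisymm (not_lt.mp fun h => hi j h hij.symm) (not_lt.mp fun h => hj i h hij)

lemma exists_isFirstOccurrence (x : ℕ → C) (n p : ℕ) :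
    ∃ j, IsFirstOccurrence x n j ∧ factorAt x n j = factorAt x n p := by
  classical
  have hex : ∃ j, factorAt x n j = factorAt x n p := ⟨p, rfl⟩
  exact ⟨Nat.find hex, fun i hi h => Nat.find_min hex hi (h.trans (Nat.find_spec hex)),
    Nat.find_spec hex⟩

lemma IsFirstOccurrence.of_succ {j : ℕ} (hj : IsFirstOccurrence x n (j + 1)) :
    IsFirstOccurrence x (n + 1) j := by
  intro i hij h
  rw [factorAt_succ', factorAt_succ'] at h
  exact hj (i + 1) (by omega) (List.cons.inj h).2

/-- The positions immediately before a maximal run of consecutive first occurrences of factors of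
length `n`. -/
def runGaps (x : ℕ → C) (n : ℕ) : Set ℕ :=
  {r | IsFirstOccurrence x n (r + 1) ∧ ¬ IsFirstOccurrence x n r}

/-- The left ends of the maximal runs of consecutive first occurrences of factors of length `n`;
position `0` always starts the first run. -/
def runStarts (x : ℕ → C) (n : ℕ) : Set ℕ := insert 0 (Nat.succ '' runGaps x n)

lemma injOn_factorAt_runGaps (x : ℕ → C) (n : ℕ) :
    Set.InjOn (factorAt x (n + 1)) (runGaps x n) :=
  fun _ hr _ hs => hr.1.of_succ.eq hs.1.of_succ

/-- A position just before a run repeats an earlier factor of length `n`, but the letter following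
it is new in that context. -/
lemma mapsTo_factorAt_runGaps (x : ℕ → C) (n : ℕ) :
    Set.MapsTo (factorAt x (n + 1)) (runGaps x n)
      {u ∈ Set.range (factorAt x (n + 1)) |
        ∃ v ∈ Set.range (factorAt x (n + 1)), v ≠ u ∧ v.dropLast = u.dropLast} := by
  rintro r ⟨hnext, hr⟩
  obtain ⟨i, hir, hi⟩ : ∃ i < r, factorAt x n i = factorAt x n r := by
    simpa [IsFirstOccurrence] using hr
  refine ⟨⟨r, rfl⟩, factorAt x (n + 1) i, ⟨i, rfl⟩, hnext.of_succ i hir, ?_⟩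
  simpa only [factorAt_succ, List.dropLast_concat] using hi

lemma finite_runStarts [Finite C] (x : ℕ → C) (n : ℕ) : (runStarts x n).Finite :=
  ((Set.Finite.of_injOn (fun r _ => Set.mem_range_self r) (injOn_factorAt_runGaps x n)
    (finite_range_factorAt x (n + 1))).image _).insert 0

lemma ncard_runStarts_add_le [Finite C] (x : ℕ → C) (n : ℕ) :
    (runStarts x n).ncard + 2 * factorComplexity x n ≤ 2 * factorComplexity x (n + 1) + 1 := by
  have hfin := finite_range_factorAt x (n + 1)
  have hdrop : List.dropLast '' Set.range (factorAt x (n + 1)) = Set.range (factorAt x n) := by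
    rw [← Set.range_comp]
    congr 1
    funext p
    simp [factorAt_succ]
  have hdouble := ncard_setOf_exists_ne_add_two_mul_ncard_image_le hfin List.dropLast
  rw [hdrop, ← factorComplexity_eq_ncard_range, ← factorComplexity_eq_ncard_range] at hdouble
  have hgaps := Set.ncard_le_ncard_of_injOn _ (mapsTo_factorAt_runGaps x n)
    (injOn_factorAt_runGaps x n) (hfin.sep _)
  have hinsert : (runStarts x n).ncard ≤ _ := Set.ncard_insert_le _ _
  rw [Set.ncard_image_of_injective _ Nat.succ_injective] at hinsert
  omega

lemma exists_mem_runStarts [Finite C] (x : ℕ → C) (n p : ℕ) :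
    ∃ r ∈ runStarts x n, ∃ k < factorComplexity x n,
      factorAt x n (r + k) = factorAt x n p := by
  obtain ⟨j, hj, hjp⟩ := exists_isFirstOccurrence x n p
  obtain ⟨r, hrj, hrun, hstart⟩ := exists_run_start hj
  have hmem : r ∈ runStarts x n := by
    cases r with
    | zero => exact Set.mem_insert _ _
    | succ i => exact Or.inr ⟨i, ⟨hrun _ ⟨le_rfl, hrj⟩, hstart i rfl⟩, rfl⟩
  have hlen : (Set.Icc r j).ncard ≤ factorComplexity x n := by
    rw [factorComplexity_eq_ncard_range]
    exact Set.ncard_le_ncard_of_injOn (factorAt x n) (fun i _ => ⟨i, rfl⟩)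
      (fun a ha b hb => (hrun a ha).eq (hrun b hb)) (finite_range_factorAt x n)
  rw [← Finset.coe_Icc, Set.ncard_coe_finset, Nat.card_Icc] at hlen
  exact ⟨r, hmem, j - r, by omega, by rwa [Nat.add_sub_cancel' hrj]⟩

lemma exists_windows [Finite C] {l m s : ℕ} (hl : 0 < l) (hm : factorComplexity x n ≤ m * l)
    (hs : factorComplexity x (n + 1) ≤ factorComplexity x n + s) :
    ∃ W : Finset ℕ, W.card ≤ (2 * s + 1) * m ∧
      ∀ p, ∃ A ∈ W, ∃ k < l, factorAt x n (A + k) = factorAt x n p := by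
  classical
  have hfin := finite_runStarts x n
  refine ⟨Finset.image₂ (fun r a => r + a * l) hfin.toFinset (Finset.range m), ?_, fun p => ?_⟩
  · have hcard := ncard_runStarts_add_le x n
    rw [Set.ncard_eq_toFinset_card _ hfin] at hcard
    refine (Finset.card_image₂_le _ _ _).trans ?_
    rw [Finset.card_range]
    exact Nat.mul_le_mul_right m (by omega)
  · obtain ⟨r, hr, k, hk, hkp⟩ := exists_mem_runStarts x n p
    refine ⟨r + k / l * l, Finset.mem_image₂_of_mem (hfin.mem_toFinset.mpr hr) ?_,
      k % l, Nat.mod_lt k hl, ?_⟩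
    · exact Finset.mem_range.mpr ((Nat.div_lt_iff_lt_mul hl).mpr (hk.trans_le hm))
    · rwa [add_assoc, mul_comm, Nat.div_add_mod]

end FirstOccurrences

section BranchingPairs

variable {C : Type*} {x : ℕ → C} {n p q p' q' t : ℕ}

/-- The factors of length `n` of `x` at the positions `p` and `q` agree but are followed by
distinct letters: the two positions witness that this factor is right special. -/
structure IsBranchingPair (x : ℕ → C) (n p q : ℕ) : Prop where
  eq : ∀ i < n, x (p + i) = x (q + i)
  ne : x (p + n) ≠ x (q + n)

namespace IsBranchingPair

lemma symm (h : IsBranchingPair x n p q) : IsBranchingPair x n q p :=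
  ⟨fun i hi => (h.eq i hi).symm, h.ne.symm⟩

lemma factorAt_eq (h : IsBranchingPair x n p q) : factorAt x n p = factorAt x n q :=
  factorAt_eq_iff.mpr h.eq

lemma congr (h : IsBranchingPair x n p q) (hp : factorAt x (n + 1) p' = factorAt x (n + 1) p)
    (hq : factorAt x (n + 1) q' = factorAt x (n + 1) q) : IsBranchingPair x n p' q' := by
  rw [factorAt_eq_iff] at hp hq
  constructor
  · intro i hi
    rw [hp i (by omega), hq i (by omega), h.eq i hi]
  · rw [hp n (by omega), hq n (by omega)]
    exact h.ne

lemma eq_of_le (h : IsBranchingPair x n p q) {y z : ℕ} (hy : p ≤ y) (hyn : y < p + n)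
    (hyz : y + q = z + p) : x y = x z := by
  have hi := h.eq (y - p) (by omega)
  rwa [show p + (y - p) = y by omega, show q + (y - p) = z by omega] at hi

/-- Otherwise `p + n` would lie inside the range where the second pair forces agreement. -/
lemma not_lt_of_same_offset (h : IsBranchingPair x n p q) (h' : IsBranchingPair x n p' q')
    (hoff : q + p' = p + q') (hle : p' ≤ p + n) : ¬ p < p' := by
  intro hlt
  exact h.ne (h'.eq_of_le (by omega) (by omega) (by omega))

lemma periodic_of_offset_add (h : IsBranchingPair x n p q) (h' : IsBranchingPair x n p' q')
    (hoff : q' + p = p' + q + t) {y : ℕ} (hp : p ≤ y) (hp' : p' ≤ y) (hyp : y + t < p + n)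
    (hyp' : y + t < p' + n) : x y = x (y + t) :=
  calc x y = x (y + q' - p') := h'.eq_of_le hp' (by omega) (by omega)
    _ = x (y + t) := (h.eq_of_le (by omega) hyp (by omega)).symm

end IsBranchingPair

/-- The positions from `s` on at which the period `t` of `x` is violated. -/
def periodBreaks (x : ℕ → C) (t s : ℕ) : Set ℕ := {y | s ≤ y ∧ x y ≠ x (y + t)}

lemma IsBranchingPair.mem_periodBreaks (h : IsBranchingPair x n p q) {s s' y z : ℕ}
    (hy : y ∈ periodBreaks x t s) (hpy : p ≤ y) (hyn : y + t < p + n) (hyz : y + q = z + p)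
    (hz : s' ≤ z) : z ∈ periodBreaks x t s' := by
  refine ⟨hz, ?_⟩
  rw [← h.eq_of_le hpy (by omega) hyz, ← h.eq_of_le (by omega) hyn (by omega : _ = z + t + p)]
  exact hy.2

/-- Copying the factor from `p` to `q` and back matches the first breaks of the period on the two
sides, unless the first break at `p` involves the branching letter `x (p + n)`. -/
lemma IsBranchingPair.sInf_periodBreaks_eq (h : IsBranchingPair x n p q) {s s' : ℕ}
    (hs : ∀ y ∈ periodBreaks x t s, p ≤ y ∧ s' + p ≤ y + q)
    (hs' : ∀ y ∈ periodBreaks x t s', q ≤ y ∧ s + q ≤ y + p)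
    (hmem : p + n - t ∈ periodBreaks x t s) :
    q + sInf (periodBreaks x t s) = p + sInf (periodBreaks x t s') ∨
      sInf (periodBreaks x t s) = p + n - t := by
  set a := sInf (periodBreaks x t s)
  set b := sInf (periodBreaks x t s')
  have ha : a ∈ periodBreaks x t s := Nat.sInf_mem ⟨_, hmem⟩
  have hle : a ≤ p + n - t := Nat.sInf_le hmem
  refine or_iff_not_imp_right.mpr fun hne => ?_
  obtain ⟨hpa, hsa⟩ := hs a ha
  have hcopy : a + q - p ∈ periodBreaks x t s' :=
    h.mem_periodBreaks ha hpa (by omega) (by omega) (by omega)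
  have hb : b ∈ periodBreaks x t s' := Nat.sInf_mem ⟨_, hcopy⟩
  have hba : b ≤ a + q - p := Nat.sInf_le hcopy
  obtain ⟨hqb, hsb⟩ := hs' b hb
  have hback : b + p - q ∈ periodBreaks x t s :=
    h.symm.mem_periodBreaks hb hqb (by omega) (by omega) (by omega)
  have hab : a ≤ b + p - q := Nat.sInf_le hback
  omega

end BranchingPairs

section Windows

variable {C : Type*} {x : ℕ → C} {n l A B p q p' q' t : ℕ}

/-- `(p, q)` is a branching pair of order `n` in the product of the windows of length `l` starting
at `A` and `B`. -/
structure IsWindowPair (x : ℕ → C) (n l A B p q : ℕ) : Prop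
    extends IsBranchingPair x n p q where
  le_fst : A ≤ p
  fst_lt : p < A + l
  le_snd : B ≤ q
  snd_lt : q < B + l

namespace IsWindowPair

lemma symm (h : IsWindowPair x n l A B p q) : IsWindowPair x n l B A q p :=
  ⟨h.toIsBranchingPair.symm, h.le_snd, h.snd_lt, h.le_fst, h.fst_lt⟩

lemma factorAt_eq_of_same_offset (h : IsWindowPair x n l A B p q)
    (h' : IsWindowPair x n l A B p' q') (hln : l ≤ n) (hoff : q + p' = p + q') :
    factorAt x n p = factorAt x n p' := by
  obtain ⟨hb, hAp, hpA, -, -⟩ := h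
  obtain ⟨hb', hAp', hpA', -, -⟩ := h'
  have hnlt := hb.not_lt_of_same_offset hb' hoff (by omega)
  have hngt := hb'.not_lt_of_same_offset hb (by omega) (by omega)
  rw [show p = p' by omega]

lemma le_of_mem_periodBreaks (h : IsWindowPair x n l A B p q)
    (h' : IsWindowPair x n l A B p' q') (hoff : q' + p = p' + q + t) :
    ∀ y ∈ periodBreaks x t (A + l), A + n ≤ y + t := by
  rintro y ⟨hy, hbreak⟩
  obtain ⟨hb, hAp, hpA, -, -⟩ := h
  obtain ⟨hb', hAp', hpA', -, -⟩ := h'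
  by_contra! hlt
  exact hbreak
    (hb.periodic_of_offset_add hb' hoff (by omega) (by omega) (by omega) (by omega))

lemma offset_or_fst_or_snd (h : IsWindowPair x n l A B p q) (hl : 4 * l ≤ n) (ht₀ : 0 < t)
    (ht : t < 2 * l)
    (hA : ∀ y ∈ periodBreaks x t (A + l), A + n ≤ y + t)
    (hB : ∀ y ∈ periodBreaks x t (B + l), B + n ≤ y + t) :
    q + sInf (periodBreaks x t (A + l)) = p + sInf (periodBreaks x t (B + l)) ∨
      p = sInf (periodBreaks x t (A + l)) + t - n ∨
      q = sInf (periodBreaks x t (B + l)) + t - n := by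
  obtain ⟨hb, hAp, hpA, hBq, hqB⟩ := h
  have hsA : ∀ y ∈ periodBreaks x t (A + l), p ≤ y ∧ B + l + p ≤ y + q := fun y hy => by
    have := hA y hy
    omega
  have hsB : ∀ y ∈ periodBreaks x t (B + l), q ≤ y ∧ A + l + q ≤ y + p := fun y hy => by
    have := hB y hy
    omega
  have hbreak : p + n - t ∈ periodBreaks x t (A + l) ∨ q + n - t ∈ periodBreaks x t (B + l) := by
    by_contra! hper
    have hp : x (p + n - t) = x (p + n - t + t) := of_not_not fun hne => hper.1 ⟨by omega, hne⟩
    have hq : x (q + n - t) = x (q + n - t + t) := of_not_not fun hne => hper.2 ⟨by omega, hne⟩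
    rw [Nat.sub_add_cancel (by omega)] at hp hq
    exact hb.ne (hp.symm.trans ((hb.eq_of_le (by omega) (by omega) (by omega)).trans hq))
  obtain hp | hq := hbreak
  · have := hb.sInf_periodBreaks_eq hsA hsB hp
    omega
  · have := hb.symm.sInf_periodBreaks_eq hsB hsA hq
    omega

end IsWindowPair

lemma exists_offset_or_fst_or_snd (x : ℕ → C) (A B : ℕ) (hl : 4 * l ≤ n) :
    ∃ a b e f : ℕ, ∀ p q, IsWindowPair x n l A B p q → q + a = p + b ∨ p = e ∨ q = f := by
  by_cases hex : ∃ p q p' q' t, IsWindowPair x n l A B p q ∧ IsWindowPair x n l A B p' q' ∧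
      0 < t ∧ q' + p = p' + q + t
  · obtain ⟨p, q, p', q', t, h, h', ht₀, hoff⟩ := hex
    have ht : t < 2 * l := by
      have := h.fst_lt
      have := h.le_snd
      have := h'.le_fst
      have := h'.snd_lt
      omega
    exact ⟨_, _, _, _, fun _ _ hpq => hpq.offset_or_fst_or_snd hl ht₀ ht
      (h.le_of_mem_periodBreaks h' hoff) (h'.symm.le_of_mem_periodBreaks h.symm (by omega))⟩
  · have hconst : ∀ p q p' q', IsWindowPair x n l A B p q → IsWindowPair x n l A B p' q' →
        q' + p ≤ p' + q := fun p q p' q' h h' => by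
      by_contra! hlt
      exact hex ⟨p, q, p', q', q' + p - (p' + q), h, h', by omega, by omega⟩
    by_cases hne : ∃ p q, IsWindowPair x n l A B p q
    · obtain ⟨p₀, q₀, h₀⟩ := hne
      exact ⟨p₀, q₀, 0, 0, fun p q h =>
        Or.inl (le_antisymm (hconst _ _ _ _ h₀ h) (by have := hconst _ _ _ _ h h₀; omega))⟩
    · push Not at hne
      exact ⟨0, 0, 0, 0, fun p q h => absurd h (hne p q)⟩

/-- The factors of length `n` which a branching pair in the windows of length `l` at `A` and `B`
shows to be right special. -/
def windowFactors (x : ℕ → C) (n l A B : ℕ) : Set (List C) :=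
  {w | ∃ p q, IsWindowPair x n l A B p q ∧ w = factorAt x n p}

lemma finite_windowFactors (x : ℕ → C) (n l A B : ℕ) : (windowFactors x n l A B).Finite := by
  refine ((Set.finite_Ico A (A + l)).image (factorAt x n)).subset ?_
  rintro _ ⟨p, q, h, rfl⟩
  exact ⟨p, ⟨h.le_fst, h.fst_lt⟩, rfl⟩

lemma ncard_windowFactors_le_three (x : ℕ → C) (A B : ℕ) (hl : 4 * l ≤ n) :
    (windowFactors x n l A B).ncard ≤ 3 := by
  obtain ⟨a, b, e, f, hline⟩ := exists_offset_or_fst_or_snd x A B hl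
  set D : Set (List C) :=
    {w | ∃ p q, IsWindowPair x n l A B p q ∧ q + a = p + b ∧ w = factorAt x n p}
  have hD : D.Subsingleton := by
    rintro _ ⟨p, q, h, hoff, rfl⟩ _ ⟨p', q', h', hoff', rfl⟩
    exact h.factorAt_eq_of_same_offset h' (by omega) (by omega)
  have hsub : windowFactors x n l A B ⊆ insert (factorAt x n e) (insert (factorAt x n f) D) := by
    rintro _ ⟨p, q, h, rfl⟩
    obtain hoff | rfl | rfl := hline p q h
    · exact Or.inr (Or.inr ⟨p, q, h, hoff, rfl⟩)
    · exact Or.inl rfl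
    · exact Or.inr (Or.inl h.factorAt_eq)
  calc (windowFactors x n l A B).ncard
      ≤ (insert (factorAt x n e) (insert (factorAt x n f) D)).ncard :=
        Set.ncard_le_ncard hsub ((hD.finite.insert _).insert _)
    _ ≤ D.ncard + 1 + 1 :=
        (Set.ncard_insert_le _ _).trans (Nat.add_le_add_right (Set.ncard_insert_le _ _) 1)
    _ ≤ 3 := by
        have := (Set.ncard_le_one hD.finite).mpr fun a ha b hb => hD ha hb
        omega

end Windows

section RightSpecial

variable {C : Type*} {x : ℕ → C}

lemma RightSpecial.exists_isBranchingPair {w : List C} (hw : RightSpecial (orbitClosure x) w) :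
    ∃ p q, IsBranchingPair x w.length p q ∧ w = factorAt x w.length p := by
  have hocc : ∀ a, w ++ [a] ∈ LangOf (orbitClosure x) →
      ∃ p, w = factorAt x w.length p ∧ a = x (p + w.length) := by
    intro a ha
    obtain ⟨p, hp⟩ := exists_eq_factorAt_of_mem_langOf_orbitClosure ha
    rw [List.length_append, List.length_singleton, factorAt_succ] at hp
    obtain ⟨hwp, hap⟩ := List.append_inj' hp rfl
    exact ⟨p, hwp, List.singleton_injective hap⟩
  obtain ⟨a, b, hab, ha, hb⟩ := hw
  obtain ⟨p, hwp, rfl⟩ := hocc a ha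
  obtain ⟨q, hwq, rfl⟩ := hocc b hb
  exact ⟨p, q, ⟨factorAt_eq_iff.mp (hwp.symm.trans hwq), hab⟩, hwp⟩

lemma ncard_rightSpecial_le_of_windows {n l : ℕ} {W : Finset ℕ} (hl : 4 * l ≤ n)
    (hW : ∀ p, ∃ A ∈ W, ∃ k < l, factorAt x (n + 1) (A + k) = factorAt x (n + 1) p) :
    {w | RightSpecial (orbitClosure x) w ∧ w.length = n}.ncard ≤ 3 * W.card ^ 2 := by
  have hsub : {w | RightSpecial (orbitClosure x) w ∧ w.length = n} ⊆
      ⋃ AB ∈ W ×ˢ W, windowFactors x n l AB.1 AB.2 := by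
    rintro w ⟨hw, rfl⟩
    obtain ⟨p, q, hpq, hwp⟩ := hw.exists_isBranchingPair
    obtain ⟨A, hA, i, hi, hAp⟩ := hW p
    obtain ⟨B, hB, j, hj, hBq⟩ := hW q
    refine Set.mem_biUnion (x := (A, B)) (Finset.mk_mem_product hA hB)
      ⟨A + i, B + j, ⟨hpq.congr hAp hBq, ?_, ?_, ?_, ?_⟩, ?_⟩
    any_goals omega
    exact hwp.trans (factorAt_eq_of_le (Nat.le_succ _) hAp).symm
  have hfin : (⋃ AB ∈ W ×ˢ W, windowFactors x n l AB.1 AB.2).Finite :=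
    (W ×ˢ W).finite_toSet.biUnion fun AB _ => finite_windowFactors x n l AB.1 AB.2
  calc {w | RightSpecial (orbitClosure x) w ∧ w.length = n}.ncard
      ≤ (⋃ AB ∈ W ×ˢ W, windowFactors x n l AB.1 AB.2).ncard := Set.ncard_le_ncard hsub hfin
    _ ≤ ∑ AB ∈ W ×ˢ W, (windowFactors x n l AB.1 AB.2).ncard := Finset.set_ncard_biUnion_le _ _
    _ ≤ (W ×ˢ W).card • 3 :=
        Finset.sum_le_card_nsmul _ _ _ fun AB _ => ncard_windowFactors_le_three x AB.1 AB.2 hl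
    _ = 3 * W.card ^ 2 := by rw [Finset.card_product, smul_eq_mul]; ring

theorem exists_forall_ncard_rightSpecial_le [Finite C] {c : ℕ}
    (hc : ∀ n, factorComplexity x n ≤ c * n + c) :
    ∃ K, ∀ n, {w | RightSpecial (orbitClosure x) w ∧ w.length = n}.ncard ≤ K := by
  refine ⟨3 * ((2 * (3 * c) + 1) * (16 * c)) ^ 2 + 4 * c, fun n => ?_⟩
  obtain hn | hn := lt_or_ge n 4
  · have hsub : {w | RightSpecial (orbitClosure x) w ∧ w.length = n} ⊆
        Set.range (factorAt x n) := by
      rintro w ⟨hw, rfl⟩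
      obtain ⟨p, -, -, hwp⟩ := hw.exists_isBranchingPair
      exact ⟨p, hwp.symm⟩
    have hle := Set.ncard_le_ncard hsub (finite_range_factorAt x n)
    rw [← factorComplexity_eq_ncard_range] at hle
    nlinarith [hc n]
  · obtain ⟨N, hnN, hNn, hinc⟩ := exists_small_increment hc n
    have hlong : factorComplexity x N ≤ 16 * c * (n / 4) :=
      calc factorComplexity x N ≤ c * (N + 1) := hc N
        _ ≤ c * (16 * (n / 4)) := Nat.mul_le_mul_left c (by omega)
        _ = 16 * c * (n / 4) := by ring
    obtain ⟨W, hWcard, hW⟩ := exists_windows (by omega) hlong hinc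
    have hcover : ∀ p, ∃ A ∈ W, ∃ k < n / 4,
        factorAt x (n + 1) (A + k) = factorAt x (n + 1) p := fun p => by
      obtain ⟨A, hA, k, hk, hkp⟩ := hW p
      exact ⟨A, hA, k, hk, factorAt_eq_of_le hnN hkp⟩
    calc _ ≤ 3 * W.card ^ 2 := ncard_rightSpecial_le_of_windows (by omega) hcover
      _ ≤ 3 * ((2 * (3 * c) + 1) * (16 * c)) ^ 2 := by gcongr
      _ ≤ _ := Nat.le_add_right _ _

end RightSpecial

section StrategyTrees

variable {C : Type*} {X : Set (ℕ → C)} {α : ℕ → ℕ} {T : Set (List C)}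

namespace IsStrategyTree

lemma ncard_children (hT : IsStrategyTree X α T) {w : List C} (hw : w ∈ T) :
    {c | w ++ [c] ∈ T}.ncard = α w.length + 1 := hT.2.2.1 w hw

lemma exists_append_mem (hT : IsStrategyTree X α T) {w : List C} (hw : w ∈ T) :
    ∃ c, w ++ [c] ∈ T :=
  Set.nonempty_of_ncard_ne_zero (s := {c | w ++ [c] ∈ T}) (by rw [hT.ncard_children hw]; omega)

lemma exists_branch (hT : IsStrategyTree X α T) {w : List C} (hw : w ∈ T) :
    ∃ y ∈ X, factorAt y w.length 0 = w := by
  choose next hnext using fun u : T => hT.exists_append_mem u.2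
  let node : ℕ → T := fun m => (fun u : T => ⟨u ++ [next u], hnext u⟩)^[m] ⟨w, hw⟩
  let y : ℕ → C := fun i => if h : i < w.length then w[i] else next (node (i - w.length))
  have hnode : ∀ m, factorAt y (w.length + m) 0 = node m := by
    intro m
    induction m with
    | zero => exact List.ext_getElem (by simp [node]) fun i _ hi => by simp_all [factorAt, y, node]
    | succ m ih =>
      rw [← add_assoc, factorAt_succ, ih]
      simp [y, node, Function.iterate_succ_apply']
  refine ⟨y, hT.2.2.2 y fun n => ?_, hnode 0⟩
  have hprefix : factorAt y n 0 ++ factorAt y w.length (0 + n) ∈ T := by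
    rw [← factorAt_add, add_comm, hnode]
    exact (node n).2
  simpa [factorAt] using hT.2.1 _ _ hprefix

lemma subset_langOf (hT : IsStrategyTree X α T) : T ⊆ LangOf X := by
  intro w hw
  obtain ⟨y, hy, hyw⟩ := hT.exists_branch hw
  exact hyw ▸ factorAt_mem_langOf hy _ _

lemma rightSpecial_of_ne_zero (hT : IsStrategyTree X α T) {w : List C} (hw : w ∈ T)
    (hα : α w.length ≠ 0) : RightSpecial X w := by
  have hcard := hT.ncard_children hw
  have hfin : {c | w ++ [c] ∈ T}.Finite := Set.finite_of_ncard_ne_zero (by omega)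
  obtain ⟨a, ha, b, hb, hab⟩ := (Set.one_lt_ncard hfin).mp (by omega)
  exact ⟨a, b, hab, hT.subset_langOf ha, hT.subset_langOf hb⟩

lemma ncard_level_succ [Finite C] (hT : IsStrategyTree X α T) (n : ℕ) :
    {w ∈ T | w.length = n + 1}.ncard = {w ∈ T | w.length = n}.ncard * (α n + 1) := by
  classical
  have hfin : ∀ m, {w ∈ T | w.length = m}.Finite := fun m =>
    (List.finite_length_eq C m).subset fun w hw => hw.2
  have hparent : ∀ u ∈ (hfin (n + 1)).toFinset, u.dropLast ∈ (hfin n).toFinset := by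
    intro u hu
    obtain ⟨hu, hlen⟩ := (hfin (n + 1)).mem_toFinset.mp hu
    obtain ⟨v, c, rfl⟩ := (u.eq_nil_or_concat').resolve_left (List.ne_nil_of_length_eq_add_one hlen)
    exact (hfin n).mem_toFinset.mpr (by simpa [hT.2.1 v [c] hu] using hlen)
  have hchildren : ∀ w ∈ (hfin n).toFinset,
      ({u ∈ (hfin (n + 1)).toFinset | u.dropLast = w} : Finset (List C)).card = α n + 1 := by
    intro w hw
    obtain ⟨hwT, rfl⟩ := (hfin n).mem_toFinset.mp hw
    have himage : (fun c => w ++ [c]) '' {c | w ++ [c] ∈ T} =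
        {u ∈ (hfin (w.length + 1)).toFinset | u.dropLast = w} := by
      ext u
      obtain rfl | ⟨v, c, rfl⟩ := u.eq_nil_or_concat' <;> aesop
    rw [← hT.ncard_children hwT, ← Set.ncard_coe_finset, ← himage, Set.ncard_image_of_injective]
    exact fun a b h => List.singleton_injective (List.append_cancel_left h)
  rw [Set.ncard_eq_toFinset_card _ (hfin (n + 1)), Set.ncard_eq_toFinset_card _ (hfin n),
    Finset.card_eq_sum_card_fiberwise hparent, Finset.sum_const_nat hchildren]

lemma one_add_sum_le_ncard_level [Finite C] (hT : IsStrategyTree X α T) (n : ℕ) :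
    1 + ∑ i ∈ Finset.range n, α i ≤ {w ∈ T | w.length = n}.ncard := by
  induction n with
  | zero =>
    have hroot : {w ∈ T | w.length = 0} = {[]} := by
      ext w
      simp +contextual [List.length_eq_zero_iff, hT.1]
    rw [hroot, Set.ncard_singleton, Finset.sum_range_zero, add_zero]
  | succ n ih =>
    have hα : α n ≤ {w ∈ T | w.length = n}.ncard * α n := Nat.le_mul_of_pos_left _ (by omega)
    rw [hT.ncard_level_succ, Finset.sum_range_succ, mul_add_one]
    omega

lemma lt_card [Finite C] (hT : IsStrategyTree X α T) (n : ℕ) : α n < Nat.card C := by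
  have hlevel := hT.one_add_sum_le_ncard_level n
  obtain ⟨w, hw, rfl⟩ : {w ∈ T | w.length = n}.Nonempty :=
    Set.nonempty_of_ncard_ne_zero (by omega)
  rw [← Nat.add_one_le_iff, ← hT.ncard_children hw]
  exact Set.ncard_le_card _

lemma sum_range_le [Finite C] (hT : IsStrategyTree X α T) {K : ℕ}
    (hK : ∀ n, {w | RightSpecial X w ∧ w.length = n}.ncard ≤ K) (n : ℕ) :
    ∑ i ∈ Finset.range n, α i ≤ K + Nat.card C := by
  induction n with
  | zero => simp
  | succ n ih =>
    rw [Finset.sum_range_succ]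
    obtain hα | hα := eq_or_ne (α n) 0
    · omega
    · have hspecial : {w ∈ T | w.length = n} ⊆ {w | RightSpecial X w ∧ w.length = n} := by
        rintro w ⟨hw, rfl⟩
        exact ⟨hT.rightSpecial_of_ne_zero hw hα, rfl⟩
      have hle := Set.ncard_le_ncard hspecial
        ((List.finite_length_eq C n).subset fun w hw => hw.2)
      have hlevel := hT.one_add_sum_le_ncard_level n
      have hletter := hT.lt_card n
      have hKn := hK n
      omega

end IsStrategyTree

lemma finiteCodingDim_winningShift [Finite C] {K : ℕ}
    (hK : ∀ n, {w | RightSpecial X w ∧ w.length = n}.ncard ≤ K) :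
    FiniteCodingDim (winningShift X) := by
  refine ⟨K + Nat.card C, ?_⟩
  rintro α ⟨T, hT⟩ F
  obtain ⟨n, hn⟩ := F.exists_nat_subset_range
  exact (Finset.sum_le_sum_of_subset hn).trans (hT.sum_range_le hK n)

end StrategyTrees

lemma FiniteCodingDim.countable {Y : Set (ℕ → ℕ)} (hY : FiniteCodingDim Y) : Y.Countable := by
  obtain ⟨d, hd⟩ := hY
  have hsupport : ∀ y ∈ Y, (Function.support y).Finite := by
    intro y hy
    by_contra hinf
    obtain ⟨F, hF, hcard⟩ := Set.Infinite.exists_subset_card_eq hinf (d + 1)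
    have hle : F.card • 1 ≤ ∑ i ∈ F, y i :=
      Finset.card_nsmul_le_sum _ _ _ fun i hi => Nat.one_le_iff_ne_zero.mpr (hF hi)
    rw [hcard, smul_eq_mul, mul_one] at hle
    exact absurd (hle.trans (hd y hy F)) (by omega)
  refine (Set.countable_range fun f : ℕ →₀ ℕ => (f : ℕ → ℕ)).mono fun y hy => ?_
  exact ⟨Finsupp.ofSupportFinite y (hsupport y hy), rfl⟩

/-- If `X` is a transitive subshift over a finite alphabet with sublinear
factor complexity, then `W(X)` is countable and has finite coding dimension. -/
theorem stmt6 {C : Type} [Fintype C] (X : Set (ℕ → C)) (hsub : IsSubshift X)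
    (htrans : ∃ x ∈ X, X = orbitClosure x)
    (hcomp : ∃ c : ℕ, ∀ n : ℕ,
      Set.ncard { w ∈ LangOf X | w.length = n } ≤ c * n + c) :
    (winningShift X).Countable ∧ FiniteCodingDim (winningShift X) := by
  obtain ⟨x, hx, rfl⟩ := htrans
  obtain ⟨c, hc⟩ := hcomp
  obtain ⟨K, hK⟩ := exists_forall_ncard_rightSpecial_le fun n =>
    (factorComplexity_le_ncard_langOf hx n).trans (hc n)
  have hdim : FiniteCodingDim (winningShift (orbitClosure x)) := finiteCodingDim_winningShift hK
  exact ⟨hdim.countable, hdim⟩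
end

section
/- There exist a comparable abstract numeration system S and an S-automatic infinite word x such that the winning shift W(O(x)) has infinite coding dimension, i.e., the sums Σα for α ∈ W(O(x)) are unbounded. -/
open scoped BigOperators

/-!
Over an alphabet `A` with at least two letters, let `x` be the Champernowne word, the concatenation
of all nonempty words over `A`, ordered by length and then lexicographically. Every word occurs in
`x`, so its orbit closure is the full shift, whose winning shift contains the constant sequence
`|A| - 1`, of infinite sum.

A position of `x` is a word of the concatenation together with one of its positions; writing it as
that word with the letter at that position marked gives a numeration system for which `x` is
automatic, as an automaton can remember the marked letter. To compare two numbers, compare the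
padded words lexicographically with the padding symbol least, which takes the length into account
first. If the words agree, the number whose mark comes first is the smaller one, although its track
of marks is lexicographically greater.
-/

theorem nonempty_orderIso_nat {ι : Type*} [LinearOrder ι] [Infinite ι]
    (hfin : ∀ a : ι, (Set.Iic a).Finite) : Nonempty (ℕ ≃o ι) := by
  classical
  let := LocallyFiniteOrder.ofFiniteIcc fun a b : ι => (hfin b).subset Set.Icc_subset_Iic_self
  let := LinearLocallyFiniteOrder.succOrder ι
  let := LinearLocallyFiniteOrder.predOrder ι
  have : NoMaxOrder ι := by
    refine ⟨fun a => ?_⟩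
    by_contra! ha
    exact Set.infinite_univ ((hfin a).subset fun b _ => ha b)
  obtain ⟨a⟩ : Nonempty ι := inferInstance
  obtain ⟨m, hm⟩ := (hfin a).exists_minimal ⟨a, le_rfl⟩
  let : OrderBot ι :=
    { bot := m
      bot_le := fun b => (le_total m b).elim id fun hb => hm.2 (hb.trans hm.1) hb }
  exact ⟨orderIsoNatOfLinearSuccPredArch.symm⟩

theorem cons_compares_cons {β : Type*} [LinearOrder β] {o₁ o₂ : Ordering} {a b : β} {u v : List β}
    (h₁ : o₁.Compares a b) (h₂ : o₂.Compares u v) :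
    (o₁.then o₂).Compares (a :: u) (b :: v) := by
  cases o₁ with
  | lt => exact List.cons_lt_cons_iff.2 (.inl h₁)
  | gt => exact List.cons_lt_cons_iff.2 (.inl h₁)
  | eq =>
    obtain rfl : a = b := h₁
    cases o₂ with
    | lt => exact List.cons_lt_cons_self.2 h₂
    | gt => exact List.cons_lt_cons_self.2 h₂
    | eq => exact congrArg (a :: ·) h₂

namespace IsRegularLang

variable {α β : Type*}

theorem iff_isRegular {L : Set (List α)} :
    IsRegularLang L ↔ Language.IsRegular (L : Language α) :=
  exists_congr fun _ => exists_congr fun _ => exists_congr fun _ => Set.ext_iff.symm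

theorem inter {K L : Set (List α)} (hK : IsRegularLang K) (hL : IsRegularLang L) :
    IsRegularLang (K ∩ L) :=
  iff_isRegular.2 ((iff_isRegular.1 hK).inf (iff_isRegular.1 hL))

theorem union {K L : Set (List α)} (hK : IsRegularLang K) (hL : IsRegularLang L) :
    IsRegularLang (K ∪ L) :=
  iff_isRegular.2 ((iff_isRegular.1 hK).add (iff_isRegular.1 hL))

theorem iInter {ι : Type} [Finite ι] {L : ι → Set (List α)} (hL : ∀ i, IsRegularLang (L i)) :
    IsRegularLang (⋂ i, L i) := by
  classical
  have := Fintype.ofFinite ι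
  choose σ hσ M hM using hL
  let N : DFA α (∀ i, σ i) :=
    { step := fun s a i => (M i).step (s i) a
      start := fun i => (M i).start
      accept := {s | ∀ i, s i ∈ (M i).accept} }
  have eval_apply (w : List α) (i : ι) : N.eval w i = (M i).eval w := by
    induction w using List.reverseRecOn with
    | nil => rfl
    | append_singleton w a ih => simp only [DFA.eval_append_singleton, ← ih, N]
  refine ⟨∀ i, σ i, inferInstance, N, fun w => ?_⟩
  simp only [Set.mem_iInter, ← hM, DFA.mem_accepts, ← eval_apply]
  rfl

theorem preimage_map (f : β → α) {L : Set (List α)} (hL : IsRegularLang L) :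
    IsRegularLang (List.map f ⁻¹' L) := by
  obtain ⟨σ, hσ, M, hM⟩ := hL
  refine ⟨σ, hσ, M.comap f, fun w => ?_⟩
  rw [DFA.accepts_comap]
  exact hM (w.map f)

theorem setOf_countP_eq (p : α → Bool) (k : ℕ) : IsRegularLang {w | w.countP p = k} := by
  let N : DFA α (Fin (k + 2)) :=
    { step := fun s a => if p a then ⟨min (s + 1) (k + 1), by omega⟩ else s
      start := 0
      accept := {s | (s : ℕ) = k} }
  have eval_val (w : List α) : (N.eval w : ℕ) = min (w.countP p) (k + 1) := by
    induction w using List.reverseRecOn with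
    | nil => rfl
    | append_singleton w a ih =>
      by_cases ha : p a
      · simp only [DFA.eval_append_singleton, N, ha, if_true, List.countP_append,
          List.countP_singleton]
        change min ((N.eval w : ℕ) + 1) (k + 1) = _
        omega
      · simpa [N, ha] using ih
  refine ⟨Fin (k + 2), inferInstance, N, fun w => ?_⟩
  change (N.eval w : ℕ) = k ↔ w.countP p = k
  rw [eval_val]
  omega

theorem setOf_compares_map [LinearOrder β] (f g : α → β) (o : Ordering) :
    IsRegularLang {w | o.Compares (w.map f) (w.map g)} := by
  let N : DFA α Ordering :=
    { step := fun q a => q.then (cmp (f a) (g a))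
      start := .eq
      accept := {o} }
  have evalFrom_eq (w : List α) :
      ∃ r : Ordering, r.Compares (w.map f) (w.map g) ∧ ∀ q, N.evalFrom q w = q.then r := by
    induction w with
    | nil => exact ⟨.eq, rfl, fun q => by simp⟩
    | cons a w ih =>
      obtain ⟨r, hr, hN⟩ := ih
      refine ⟨_, cons_compares_cons (cmp_compares (f a) (g a)) hr, fun q => ?_⟩
      rw [DFA.evalFrom_cons, hN, ← Ordering.then_assoc]
  refine ⟨Ordering, inferInstance, N, fun w => ?_⟩
  obtain ⟨r, hr, hN⟩ := evalFrom_eq w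
  have accepts_iff : w ∈ N.accepts ↔ r = o := by
    rw [DFA.mem_accepts, DFA.eval, hN]
    rfl
  rw [accepts_iff]
  exact ⟨fun h => h ▸ hr, fun h => hr.inj h⟩

theorem setOf_map_le_map [LinearOrder β] (f g : α → β) :
    IsRegularLang {w | w.map f ≤ w.map g} := by
  simp only [le_iff_lt_or_eq]
  exact (setOf_compares_map f g .lt).union (setOf_compares_map f g .eq)

end IsRegularLang

section Padding

variable {A B : Type*}

/-- The automaton that skips a prefix of padding symbols and then simulates `M`. The Boolean records
whether a letter has been read, after which a padding symbol leads to the dead state `none`. -/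
def leftPadDFA {σ : Type*} (M : DFA A σ) : DFA (Option A) (Option (Bool × σ)) where
  step
    | some (false, s), none => some (false, s)
    | some (_, s), some a => some (true, M.step s a)
    | _, _ => none
  start := some (false, M.start)
  accept := {q | ∃ b, ∃ s ∈ M.accept, q = some (b, s)}

theorem leftPadDFA_eval {σ : Type*} (M : DFA A σ) (k : ℕ) (u : List A) :
    (leftPadDFA M).eval (List.replicate k none ++ u.map some) = some (!u.isEmpty, M.eval u) := by
  induction u using List.reverseRecOn with
  | nil =>
    induction k with
    | zero => rfl
    | succ _ ih => exact ih
  | append_singleton u a ih =>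
    rw [List.map_append, ← List.append_assoc, List.map_singleton, DFA.eval_append_singleton, ih,
      DFA.eval_append_singleton]
    cases u <;> rfl

theorem leftPadDFA_eval_eq_none_or {σ : Type*} (M : DFA A σ) (w : List (Option A)) :
    (leftPadDFA M).eval w = none ∨
      ∃ (k : ℕ) (u : List A), w = List.replicate k none ++ u.map some := by
  induction w using List.reverseRecOn with
  | nil => exact .inr ⟨0, [], rfl⟩
  | append_singleton w c ih =>
    rw [DFA.eval_append_singleton]
    rcases ih with hw | ⟨k, u, rfl⟩
    · rw [hw]
      exact .inl rfl
    · cases c with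
      | some a => exact .inr ⟨k, u ++ [a], by simp⟩
      | none =>
        cases u with
        | nil => exact .inr ⟨k + 1, [], by simp [List.replicate_succ']⟩
        | cons a u =>
          rw [leftPadDFA_eval]
          exact .inl rfl

theorem IsRegularLang.leftPad {L : Set (List A)} (hL : IsRegularLang L) :
    IsRegularLang {w | ∃ k, ∃ u ∈ L, w = List.replicate k none ++ u.map some} := by
  obtain ⟨σ, hσ, M, hM⟩ := hL
  refine ⟨_, inferInstance, leftPadDFA M, fun w => ⟨?_, ?_⟩⟩
  · rintro ⟨b, s, hs, hw⟩
    change (leftPadDFA M).eval w = _ at hw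
    rcases leftPadDFA_eval_eq_none_or M w with hnone | ⟨k, u, rfl⟩
    · simp [hnone] at hw
    · obtain ⟨-, rfl⟩ : (!u.isEmpty) = b ∧ M.eval u = s := by
        simpa only [leftPadDFA_eval, Option.some.injEq, Prod.mk.injEq] using hw
      exact ⟨k, u, (hM u).1 hs, rfl⟩
  · rintro ⟨k, u, hu, rfl⟩
    exact ⟨_, _, (hM u).2 hu, leftPadDFA_eval M k u⟩

theorem length_padOne {M : ℕ} {w : List A} (h : w.length ≤ M) : (padOne M w).length = M := by
  simp [padOne, h]

variable {d : ℕ}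

theorem length_le_length_padTuple (ws : Fin d → List A) (i : Fin d) :
    (ws i).length ≤ (padTuple ws).length := by
  rw [padTuple, List.length_ofFn]
  exact Finset.le_sup (f := fun i => (ws i).length) (Finset.mem_univ i)

theorem map_apply_padTuple (ws : Fin d → List A) (i : Fin d) :
    (padTuple ws).map (· i) = padOne (padTuple ws).length (ws i) := by
  have hlen := length_padOne (length_le_length_padTuple ws i)
  refine List.ext_getElem (by simp [hlen]) fun j _ hj => ?_
  simp only [padTuple, List.getElem_map, List.getElem_ofFn, List.length_ofFn] at hj ⊢
  exact List.getD_eq_getElem _ _ hj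

theorem exists_apply_ne_none_of_mem_padTuple {ws : Fin d → List A} {c : Fin d → Option A}
    (hc : c ∈ padTuple ws) : ∃ i, c i ≠ none := by
  have hd : (Finset.univ : Finset (Fin d)).Nonempty := by
    rw [Finset.nonempty_iff_ne_empty]
    intro hempty
    simp [padTuple, hempty] at hc
  obtain ⟨i, -, hi⟩ := Finset.exists_mem_eq_sup _ hd fun i => (ws i).length
  have hlen : (padTuple ws).length = (ws i).length := by rw [padTuple, List.length_ofFn, hi]
  have hci : c i ∈ (padTuple ws).map (· i) := List.mem_map_of_mem hc
  refine ⟨i, fun hnone => ?_⟩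
  simp [map_apply_padTuple, hlen, padOne, hnone] at hci

theorem eq_of_forall_map_apply_eq {l l' : List (Fin d → A)} (hlen : l.length = l'.length)
    (h : ∀ i, l.map (· i) = l'.map (· i)) : l = l' := by
  refine List.ext_getElem hlen fun j hj hj' => funext fun i => ?_
  simpa [hj, hj'] using congrArg (·[j]?) (h i)

theorem eq_padTuple {l : List (Fin d → Option A)} {ws : Fin d → List A} {k : Fin d → ℕ}
    (hl : ∀ i, l.map (· i) = List.replicate (k i) none ++ (ws i).map some)
    (hne : ∀ c ∈ l, ∃ i, c i ≠ none) : l = padTuple ws := by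
  have hlen (i) : l.length = k i + (ws i).length := by
    simpa using congrArg List.length (hl i)
  have length_eq : l.length = (padTuple ws).length := by
    rw [padTuple, List.length_ofFn]
    refine le_antisymm ?_ (Finset.sup_le fun i _ => by grind)
    rcases l with _ | ⟨c, l⟩
    · exact Nat.zero_le _
    · obtain ⟨i, hi⟩ := hne c List.mem_cons_self
      have hk : k i = 0 := by
        by_contra hk
        obtain ⟨m, hm⟩ := Nat.exists_eq_succ_of_ne_zero hk
        exact hi (by simpa [hm, List.replicate_succ] using congrArg List.head? (hl i))
      rw [hlen i, hk, Nat.zero_add]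
      exact Finset.le_sup (f := fun i => (ws i).length) (Finset.mem_univ i)
  refine eq_of_forall_map_apply_eq length_eq fun i => ?_
  rw [map_apply_padTuple, hl, padOne, ← length_eq, hlen i, Nat.add_sub_cancel]

theorem IsRegularLang.padTuple {L : Set (List A)} (hL : IsRegularLang L) (d : ℕ) :
    IsRegularLang {l | ∃ ws : Fin d → List A, (∀ i, ws i ∈ L) ∧ l = padTuple ws} := by
  classical
  have htracks := iInter fun i : Fin d => hL.leftPad.preimage_map fun c : Fin d → Option A => c i
  have hcolumns := setOf_countP_eq (fun c : Fin d → Option A => decide (∀ i, c i = none)) 0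
  convert htracks.inter hcolumns using 1
  ext l
  simp only [Set.mem_inter_iff, Set.mem_iInter, Set.mem_preimage, Set.mem_ofPred_eq,
    List.countP_eq_zero, decide_eq_true_eq, not_forall]
  constructor
  · rintro ⟨ws, hws, rfl⟩
    exact ⟨fun i => ⟨_, ws i, hws i, map_apply_padTuple ws i⟩,
      fun c hc => exists_apply_ne_none_of_mem_padTuple hc⟩
  · rintro ⟨hl, hne⟩
    choose k ws hws hl using hl
    exact ⟨ws, hws, eq_padTuple hl hne⟩

theorem ANS.recognizable_of_mem_iff {S : ANS A} (hS : IsRegularLang (Set.range S.rep))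
    {R : Set (List (Fin d → Option A))} (hR : IsRegularLang R) {Y : Set (Fin d → ℕ)}
    (hRY : ∀ t, padTuple (fun i => S.rep (t i)) ∈ R ↔ t ∈ Y) : S.Recognizable Y := by
  unfold ANS.Recognizable
  convert (hS.padTuple d).inter hR using 1
  ext l
  constructor
  · rintro ⟨t, ht, rfl⟩
    exact ⟨⟨_, fun i => ⟨t i, rfl⟩, rfl⟩, (hRY t).2 ht⟩
  · rintro ⟨⟨ws, hws, rfl⟩, hl⟩
    choose t ht using hws
    obtain rfl : (fun i => S.rep (t i)) = ws := funext ht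
    exact ⟨t, (hRY t).1 hl, rfl⟩

/-- The padded word `padOne M w` regarded over `WithBot A`, so that the padding symbol precedes
every letter. -/
def botPad (M : ℕ) (w : List A) : List (WithBot A) :=
  List.replicate (M - w.length) ⊥ ++ w.map WithBot.some

theorem botPad_injective (M : ℕ) : Function.Injective (botPad (A := A) M) :=
  Function.LeftInverse.injective (g := List.filterMap (WithBot.recBotCoe none some)) fun w => by
    simp [botPad, List.filterMap_replicate, Function.comp_def]

/-- The image under `f` of the `i`-th component of a letter of a padded tuple, the padding symbol
becoming `⊥`. -/
def botTrack (f : A → B) (i : Fin d) (c : Fin d → Option A) : WithBot B :=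
  (c i).elim ⊥ fun a => f a

theorem map_botTrack_padTuple (f : A → B) (ws : Fin d → List A) (i : Fin d) :
    (padTuple ws).map (botTrack f i) = botPad (padTuple ws).length ((ws i).map f) := by
  calc
    _ = ((padTuple ws).map (· i)).map (Option.elim · ⊥ fun a => (f a : WithBot B)) := by
      rw [List.map_map]
      rfl
    _ = botPad (padTuple ws).length ((ws i).map f) := by
      simp [map_apply_padTuple, padOne, botPad]

theorem botPad_lt_botPad_of_shortlex [LinearOrder A] {M : ℕ} {u v : List A} (hv : v.length ≤ M)
    (h : u.length < v.length ∨ u.length = v.length ∧ u < v) : botPad M u < botPad M v := by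
  rcases h with hlt | ⟨hlen, hlt⟩
  · obtain ⟨b, v, rfl⟩ := List.exists_cons_of_length_pos (Nat.zero_lt_of_lt hlt)
    obtain ⟨k, hk⟩ : ∃ k, M - u.length = M - (b :: v).length + (k + 1) :=
      ⟨(b :: v).length - u.length - 1, by omega⟩
    rw [botPad, botPad, hk, List.replicate_add, List.append_assoc]
    exact List.append_left_lt (List.cons_lt_cons_iff.2 (.inl (WithBot.bot_lt_coe b)))
  · rw [botPad, botPad, hlen]
    exact List.append_left_lt (List.map_lt (fun _ _ => WithBot.coe_lt_coe.2) hlt)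

theorem botPad_lt_botPad_iff [LinearOrder A] {M : ℕ} {u v : List A} (hu : u.length ≤ M)
    (hv : v.length ≤ M) :
    botPad M u < botPad M v ↔ u.length < v.length ∨ u.length = v.length ∧ u < v := by
  refine ⟨fun h => ?_, botPad_lt_botPad_of_shortlex hv⟩
  by_contra! hn
  rcases eq_or_ne u v with rfl | hne
  · exact lt_irrefl _ h
  · refine lt_asymm h (botPad_lt_botPad_of_shortlex hu ?_)
    grind

end Padding

/-- A nonempty word `left ++ letter :: right` with a distinguished position. Pointed words stand for
the natural numbers: all pointings of one word form a block of consecutive numbers. -/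
@[ext]
structure PointedWord (A : Type*) where
  left : List A
  letter : A
  right : List A

namespace PointedWord

variable {A : Type*}

/-- The word underlying a pointed word. -/
def word (p : PointedWord A) : List A :=
  p.left ++ p.letter :: p.right

/-- The key by which pointed words are ordered: by the length of the word, then by the word, then
by the position. -/
def orderKey (p : PointedWord A) : ℕ ×ₗ List A ×ₗ ℕ :=
  toLex (p.word.length, toLex (p.word, p.left.length))

theorem eq_of_word_eq {p q : PointedWord A} (hword : p.word = q.word)
    (hpos : p.left.length = q.left.length) : p = q := by
  obtain ⟨hleft, hright⟩ := List.append_inj hword hpos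
  exact PointedWord.ext hleft (List.cons.inj hright).1 (List.cons.inj hright).2

theorem orderKey_injective : Function.Injective (orderKey (A := A)) := fun _ _ h =>
  eq_of_word_eq (congrArg (fun k => (ofLex (ofLex k).2).1) h)
    (congrArg (fun k => (ofLex (ofLex k).2).2) h)

instance [Nonempty A] : Infinite (PointedWord A) :=
  let ⟨a⟩ := ‹Nonempty A›
  Infinite.of_injective (fun n => ⟨List.replicate n a, a, []⟩) fun m n h => by
    simpa using congrArg (fun p => p.left.length) h

/-- The word over `A × Bool` in which the letter at the distinguished position is marked by `true`
and all others by `false`. -/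
def encode (p : PointedWord A) : List (A × Bool) :=
  p.left.map (·, false) ++ (p.letter, true) :: p.right.map (·, false)

/-- The second track of `encode`. -/
def marks (p : PointedWord A) : List Bool :=
  List.replicate p.left.length false ++ true :: List.replicate p.right.length false

theorem map_fst_encode (p : PointedWord A) : p.encode.map Prod.fst = p.word := by
  simp [encode, word, Function.comp_def]

theorem map_snd_encode (p : PointedWord A) : p.encode.map Prod.snd = p.marks := by
  simp [encode, marks, Function.comp_def]

theorem length_marks (p : PointedWord A) : p.marks.length = p.word.length := by
  rw [← map_fst_encode, ← map_snd_encode, List.length_map, List.length_map]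

theorem range_encode :
    Set.range (encode (A := A)) = {l : List (A × Bool) | l.countP Prod.snd = 1} := by
  have exists_map_eq {l : List (A × Bool)} (hl : ∀ c ∈ l, ¬c.2) :
      ∃ u : List A, u.map (·, false) = l := by
    rw [← Set.mem_range, Set.range_list_map]
    exact fun c hc => ⟨c.1, Prod.ext rfl (Bool.eq_false_iff.2 (hl c hc)).symm⟩
  ext l
  constructor
  · rintro ⟨p, rfl⟩
    simp [encode, Function.comp_def]
  · intro hl
    rw [Set.mem_ofPred_eq, List.countP_eq_length_filter, List.length_eq_one_iff] at hl
    obtain ⟨⟨a, b⟩, hl⟩ := hl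
    obtain ⟨l₁, l₂, rfl, hl₁, rfl, hl₂⟩ := List.filter_eq_cons_iff.1 hl
    obtain ⟨u, rfl⟩ := exists_map_eq hl₁
    obtain ⟨v, rfl⟩ := exists_map_eq (List.filter_eq_nil_iff.1 hl₂)
    exact ⟨⟨u, a, v⟩, rfl⟩

theorem botPad_marks_lt_botPad_marks {p q : PointedWord A} {M : ℕ} (hp : p.word.length ≤ M)
    (hlen : p.word.length = q.word.length) (h : p.left.length < q.left.length) :
    botPad M q.marks < botPad M p.marks := by
  have hlt : q.marks < p.marks := by
    obtain ⟨k, hk⟩ := Nat.exists_eq_add_of_lt h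
    rw [marks, marks, hk, Nat.add_assoc, List.replicate_add, List.append_assoc]
    exact List.append_left_lt (List.cons_lt_cons_iff.2 (.inl Bool.false_lt_true))
  exact botPad_lt_botPad_of_shortlex (by rwa [length_marks])
    (.inr ⟨by rw [length_marks, length_marks, hlen], hlt⟩)

theorem botPad_marks_le_botPad_marks_iff {p q : PointedWord A} {M : ℕ} (hp : p.word.length ≤ M)
    (hword : p.word = q.word) :
    botPad M q.marks ≤ botPad M p.marks ↔ p.left.length ≤ q.left.length := by
  refine ⟨fun h => ?_, fun h => ?_⟩
  · by_contra! hlt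
    exact h.not_gt (botPad_marks_lt_botPad_marks (hword ▸ hp) (congrArg _ hword.symm) hlt)
  · rcases h.lt_or_eq with hlt | hpos
    · exact (botPad_marks_lt_botPad_marks hp (congrArg _ hword) hlt).le
    · rw [eq_of_word_eq hword hpos]

theorem encode_injective : Function.Injective (encode (A := A)) := by
  intro p q h
  have hword : p.word = q.word := by rw [← map_fst_encode, h, map_fst_encode]
  have hmarks : p.marks = q.marks := by rw [← map_snd_encode, h, map_snd_encode]
  have hle : p.left.length ≤ q.left.length :=
    (botPad_marks_le_botPad_marks_iff le_rfl hword).1 (by rw [hmarks])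
  have hge : q.left.length ≤ p.left.length :=
    (botPad_marks_le_botPad_marks_iff le_rfl hword.symm).1 (by rw [hmarks])
  exact eq_of_word_eq hword (hle.antisymm hge)

variable [LinearOrder A]

instance : LinearOrder (PointedWord A) :=
  LinearOrder.lift' orderKey orderKey_injective

theorem le_iff {p q : PointedWord A} :
    p ≤ q ↔ p.word.length < q.word.length ∨ p.word.length = q.word.length ∧
      (p.word < q.word ∨ p.word = q.word ∧ p.left.length ≤ q.left.length) :=
  Prod.Lex.le_iff.trans (or_congr_right (and_congr_right fun _ => Prod.Lex.le_iff))

theorem lt_iff {p q : PointedWord A} :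
    p < q ↔ p.word.length < q.word.length ∨ p.word.length = q.word.length ∧
      (p.word < q.word ∨ p.word = q.word ∧ p.left.length < q.left.length) :=
  Prod.Lex.lt_iff.trans (or_congr_right (and_congr_right fun _ => Prod.Lex.lt_iff))

theorem le_iff_botPad {p q : PointedWord A} {M : ℕ} (hp : p.word.length ≤ M)
    (hq : q.word.length ≤ M) :
    p ≤ q ↔ botPad M p.word < botPad M q.word ∨
      botPad M p.word = botPad M q.word ∧ botPad M q.marks ≤ botPad M p.marks := by
  rw [le_iff, botPad_lt_botPad_iff hp hq, (botPad_injective M).eq_iff]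
  by_cases hword : p.word = q.word
  · rw [botPad_marks_le_botPad_marks_iff hp hword]
    simp [hword]
  · simp [hword]

theorem le_iff_map_botTrack {d : ℕ} (ps : Fin d → PointedWord A) (i j : Fin d) :
    letI l := padTuple fun k => (ps k).encode
    ps i ≤ ps j ↔ l.map (botTrack Prod.fst i) < l.map (botTrack Prod.fst j) ∨
      l.map (botTrack Prod.fst i) = l.map (botTrack Prod.fst j) ∧
        l.map (botTrack Prod.snd j) ≤ l.map (botTrack Prod.snd i) := by
  have length_word_le (k) :
      (ps k).word.length ≤ (padTuple fun k => (ps k).encode).length := by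
    rw [← map_fst_encode, List.length_map]
    exact length_le_length_padTuple (fun k => (ps k).encode) k
  simp only [map_botTrack_padTuple, map_fst_encode, map_snd_encode]
  exact le_iff_botPad (length_word_le i) (length_word_le j)

theorem finite_Iic [Finite A] (p : PointedWord A) : (Set.Iic p).Finite := by
  refine .of_injOn (f := encode) (fun q hq => ?_) encode_injective.injOn
    (List.finite_length_le (A × Bool) p.word.length)
  have hlen : q.encode.length = q.word.length := by rw [← map_fst_encode, List.length_map]
  have hle := le_iff.1 (Set.mem_Iic.1 hq)
  grind

theorem covBy_of_word_eq {p q : PointedWord A} (hword : p.word = q.word)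
    (hpos : q.left.length = p.left.length + 1) : p ⋖ q := by
  refine ⟨lt_iff.2 (by grind), fun r hpr hrq => ?_⟩
  rw [lt_iff, hword] at hpr
  rw [lt_iff] at hrq
  grind

end PointedWord

section Champernowne

variable (A : Type*) [LinearOrder A] [Finite A] [Nonempty A]

/-- The increasing enumeration of the pointed words over `A`. -/
noncomputable def pointedWordEnum : ℕ ≃o PointedWord A :=
  (nonempty_orderIso_nat PointedWord.finite_Iic).some

/-- The numeration system representing `n` by the encoding of the `n`-th pointed word. -/
noncomputable def champernowneANS : ANS (A × Bool) where
  rep n := (pointedWordEnum A n).encode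
  inj := PointedWord.encode_injective.comp (pointedWordEnum A).injective

/-- The Champernowne word over `A`, the concatenation of all words over `A` in the order by length
and then lexicographically: its `n`-th letter is the distinguished letter of the `n`-th pointed
word. -/
noncomputable def champernowneWord (n : ℕ) : A :=
  (pointedWordEnum A n).letter

theorem isRegularLang_range_champernowneANS_rep :
    IsRegularLang (Set.range (champernowneANS A).rep) := by
  have hrange : Set.range (champernowneANS A).rep = Set.range PointedWord.encode :=
    (pointedWordEnum A).surjective.range_comp PointedWord.encode
  rw [hrange, PointedWord.range_encode]
  exact .setOf_countP_eq Prod.snd 1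

theorem champernowneANS_comparable : (champernowneANS A).Comparable := by
  have hregular : IsRegularLang {l : List (Fin 2 → Option (A × Bool)) |
      l.map (botTrack Prod.fst 0) < l.map (botTrack Prod.fst 1) ∨
        l.map (botTrack Prod.fst 0) = l.map (botTrack Prod.fst 1) ∧
          l.map (botTrack Prod.snd 1) ≤ l.map (botTrack Prod.snd 0)} :=
    (IsRegularLang.setOf_compares_map _ _ .lt).union
      ((IsRegularLang.setOf_compares_map _ _ .eq).inter (IsRegularLang.setOf_map_le_map _ _))
  exact ANS.recognizable_of_mem_iff (isRegularLang_range_champernowneANS_rep A) hregular fun t =>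
    (PointedWord.le_iff_map_botTrack (fun i => pointedWordEnum A (t i)) 0 1).symm.trans
      (pointedWordEnum A).le_iff_le

variable {A}

theorem champernowneWord_symm_add (u : List A) (a : A) (v : List A) {i : ℕ}
    (hi : i < (a :: v).length) :
    champernowneWord A ((pointedWordEnum A).symm ⟨u, a, v⟩ + i) = (a :: v)[i] := by
  induction i generalizing u a v with
  | zero => simp [champernowneWord]
  | succ i ih =>
    obtain _ | ⟨b, v⟩ := v
    · simp at hi
    · have hcov : (⟨u, a, b :: v⟩ : PointedWord A) ⋖ ⟨u ++ [a], b, v⟩ :=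
        PointedWord.covBy_of_word_eq (by simp [PointedWord.word]) (by simp)
      rw [← apply_covBy_apply_iff (pointedWordEnum A).symm, Nat.covBy_iff_add_one_eq] at hcov
      rw [← Nat.add_assoc, Nat.add_right_comm, hcov]
      exact ih _ _ _ (Nat.lt_of_succ_lt_succ hi)

variable (A)

theorem orbitClosure_champernowneWord : orbitClosure (champernowneWord A) = Set.univ := by
  refine Set.eq_univ_of_forall fun y n => ?_
  let v : List A := List.ofFn fun i : Fin n => y (i + 1)
  have hv : y 0 :: v = List.ofFn fun i : Fin (n + 1) => y i := by
    rw [List.ofFn_succ]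
    rfl
  refine ⟨(pointedWordEnum A).symm ⟨[], y 0, v⟩, fun i hi => ?_⟩
  rw [champernowneWord_symm_add [] (y 0) v (by grind)]
  simp only [hv, List.getElem_ofFn]

end Champernowne

theorem sAutomatic_champernowneWord (A : Type) [LinearOrder A] [Finite A] [Nonempty A] :
    SAutomatic (champernowneANS A) (champernowneWord A) := by
  let M : DFA (A × Bool) A :=
    { step := fun s c => if c.2 then c.1 else s
      start := Classical.arbitrary A
      accept := ∅ }
  have evalFrom_unmarked (s : A) (u : List A) : M.evalFrom s (u.map (·, false)) = s := by
    induction u with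
    | nil => rfl
    | cons _ _ ih => exact ih
  refine ⟨A, .ofFinite A, M, id, fun n => ?_⟩
  change M.eval (pointedWordEnum A n).encode = (pointedWordEnum A n).letter
  rw [PointedWord.encode, DFA.eval, DFA.evalFrom_of_append, evalFrom_unmarked, DFA.evalFrom_cons,
    evalFrom_unmarked]
  rfl

theorem const_mem_winningShift_univ (C : Type*) [Finite C] [Nonempty C] :
    (fun _ => Nat.card C - 1) ∈ winningShift (Set.univ : Set (ℕ → C)) := by
  refine ⟨Set.univ, trivial, fun _ _ _ => trivial, fun w _ => ?_, fun _ _ => trivial⟩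
  rw [Nat.sub_add_cancel Nat.card_pos]
  exact Set.ncard_univ C

theorem not_finiteCodingDim_winningShift_univ (C : Type*) [Finite C] [Nontrivial C] :
    ¬FiniteCodingDim (winningShift (Set.univ : Set (ℕ → C))) := by
  rintro ⟨d, hd⟩
  have hsum := hd _ (const_mem_winningShift_univ C) (Finset.range (d + 1))
  have hcard : 1 < Nat.card C := Finite.one_lt_card
  rw [Finset.sum_const, Finset.card_range, smul_eq_mul] at hsum
  have := Nat.le_mul_of_pos_right (d + 1) (Nat.sub_pos_of_lt hcard)
  omega

/-- There exist a comparable ANS `S` and an `S`-automatic word `x` such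
that the winning shift of the subshift generated by `x` has infinite coding dimension. -/
theorem stmt11 :
    ∃ (A : Type) (_ : Fintype A) (S : ANS A) (C : Type) (_ : Fintype C) (x : ℕ → C),
      S.Comparable ∧ SAutomatic S x ∧
      ¬ FiniteCodingDim (winningShift (orbitClosure x)) := by
  refine ⟨Bool × Bool, inferInstance, champernowneANS Bool, Bool, inferInstance,
    champernowneWord Bool, champernowneANS_comparable Bool, sAutomatic_champernowneWord Bool, ?_⟩
  rw [orbitClosure_champernowneWord]
  exact not_finiteCodingDim_winningShift_univ Bool
end
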